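/- Let M ∈ ℝ^{n×n} be a fixed matrix and let r be a uniformly random unit vector in ℝ^n. If Pr[‖Mr‖² ≤ a] ≥ 9/10, then ‖M‖_F² ≤ C·n·a for some universal constant C. -/

import Mathlib

open MeasureTheory

/-- The uniform probability measure on the unit sphere of `ℝⁿ` (Euclidean norm),
obtained by normalizing the spherical part of Lebesgue measure. -/
noncomputable def sphereUniform (n : ℕ) :
    Measure (Metric.sphere (0 : EuclideanSpace ℝ (Fin n)) 1) :=
  (((volume : Measure (EuclideanSpace ℝ (Fin n))).toSphere Set.univ)⁻¹ : ENNReal) •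
    (volume : Measure (EuclideanSpace ℝ (Fin n))).toSphere

namespace FrobAux

open scoped RealInnerProductSpace Pointwise

abbrev Sp (n : ℕ) := Metric.sphere (0 : EuclideanSpace ℝ (Fin n)) 1

lemma prob (n : ℕ) (hn : n ≠ 0) : IsProbabilityMeasure (sphereUniform n) := by
  have : Nonempty (Fin n) := ⟨⟨0, Nat.pos_of_ne_zero hn⟩⟩
  refine ⟨?_⟩
  rw [sphereUniform, Measure.smul_apply, smul_eq_mul]
  apply ENNReal.inv_mul_cancel
  · rw [Ne, Measure.measure_univ_eq_zero]
    exact Measure.toSphere_ne_zero _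
  · exact measure_ne_top _ _

lemma invar (n : ℕ) (U : EuclideanSpace ℝ (Fin n) ≃ₗᵢ[ℝ] EuclideanSpace ℝ (Fin n)) :
    ((sphereUniform n).map Subtype.val).map U = (sphereUniform n).map Subtype.val := by
  have hU : Measurable U := U.continuous.measurable
  ext s hs
  rw [Measure.map_apply hU hs, Measure.map_apply measurable_subtype_coe (hU hs),
    Measure.map_apply measurable_subtype_coe hs, sphereUniform, Measure.smul_apply,
    Measure.smul_apply, Measure.toSphere_apply' _ (measurable_subtype_coe (hU hs)),
    Measure.toSphere_apply' _ (measurable_subtype_coe hs)]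
  congr 2
  rw [← (U.measurePreserving).measure_preimage_equiv (f := U.toMeasurableEquiv)
    (Set.Ioo (0 : ℝ) 1 • (Subtype.val '' (Subtype.val ⁻¹' s : Set (Sp n))))]
  congr 1
  ext x
  simp only [Set.mem_smul, Set.mem_image, Set.mem_preimage, LinearIsometryEquiv.coe_toMeasurableEquiv]
  constructor
  · rintro ⟨t, ht, y, ⟨z, hz, rfl⟩, rfl⟩
    exact ⟨t, ht, U z, ⟨⟨U z, by simp⟩, hz, rfl⟩, by simp⟩
  · rintro ⟨t, ht, y, ⟨z, hz, rfl⟩, h⟩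
    refine ⟨t, ht, U.symm z, ⟨⟨U.symm z, by simp⟩, by simpa using hz, rfl⟩, ?_⟩
    apply U.injective
    simp [h]

lemma int_invar (n : ℕ) (U : EuclideanSpace ℝ (Fin n) ≃ₗᵢ[ℝ] EuclideanSpace ℝ (Fin n))
    (f : EuclideanSpace ℝ (Fin n) → ℝ) (hf : Continuous f) :
    ∫ r : Sp n, f (U r.val) ∂(sphereUniform n) = ∫ r : Sp n, f r.val ∂(sphereUniform n) := by
  have hU : Measurable U := U.continuous.measurable
  have h1 := integral_map (μ := sphereUniform n) measurable_subtype_coe.aemeasurable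
    (hf.aestronglyMeasurable)
  have h2 := integral_map (μ := sphereUniform n) (f := fun x => f (U x))
    measurable_subtype_coe.aemeasurable ((hf.comp U.continuous).aestronglyMeasurable)
  rw [← h1, ← h2, ← integral_map hU.aemeasurable hf.aestronglyMeasurable, invar]

lemma integ (n : ℕ) (hn : n ≠ 0) (f : Sp n → ℝ) (hf : Continuous f) :
    Integrable f (sphereUniform n) := by
  have := prob n hn
  exact hf.integrable_of_hasCompactSupport (HasCompactSupport.of_compactSpace f)

lemma pow_eq (n k : ℕ) (u v : EuclideanSpace ℝ (Fin n)) (h : ‖u‖ = ‖v‖) :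
    ∫ r : Sp n, ⟪u, r.val⟫ ^ k ∂(sphereUniform n)
      = ∫ r : Sp n, ⟪v, r.val⟫ ^ k ∂(sphereUniform n) := by
  let U := (Submodule.span ℝ {u - v})ᗮ.reflection
  have hU : U u = v := Submodule.reflection_sub h
  rw [← int_invar n U (fun x => ⟪v, x⟫ ^ k) (by fun_prop)]
  simp only [← hU, LinearIsometryEquiv.inner_map_map]

lemma pow_scale (n k : ℕ) (u e : EuclideanSpace ℝ (Fin n)) (he : ‖e‖ = 1) :
    ∫ r : Sp n, ⟪u, r.val⟫ ^ k ∂(sphereUniform n)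
      = ‖u‖ ^ k * ∫ r : Sp n, ⟪e, r.val⟫ ^ k ∂(sphereUniform n) := by
  rw [pow_eq n k u (‖u‖ • e) (by simp [norm_smul, he])]
  simp only [real_inner_smul_left, mul_pow]
  rw [integral_const_mul]

noncomputable abbrev bs (n : ℕ) (i : Fin n) : EuclideanSpace ℝ (Fin n) := EuclideanSpace.single i 1

lemma sumsq (n : ℕ) (r : Sp n) : ∑ i, ⟪bs n i, r.val⟫ ^ 2 = 1 := by
  have h : ‖r.val‖ = 1 := by simp
  have := EuclideanSpace.real_norm_sq_eq r.val
  rw [h] at this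
  simpa [bs, EuclideanSpace.inner_single_left] using this.symm

lemma m2 (n : ℕ) (hn : n ≠ 0) (u : EuclideanSpace ℝ (Fin n)) :
    ∫ r : Sp n, ⟪u, r.val⟫ ^ 2 ∂(sphereUniform n) = ‖u‖ ^ 2 / n := by
  have := prob n hn
  let i0 : Fin n := ⟨0, Nat.pos_of_ne_zero hn⟩
  have hs : ∑ i, ∫ r : Sp n, ⟪bs n i, r.val⟫ ^ 2 ∂(sphereUniform n) = 1 := by
    rw [← integral_finsetSum _ (fun i _ => integ n hn _ (by fun_prop))]
    simp only [sumsq]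
    simp
  rw [Finset.sum_congr rfl (fun i _ => pow_eq n 2 (bs n i) (bs n i0) (by simp))] at hs
  rw [pow_scale n 2 u (bs n i0) (by simp)]
  simp only [Finset.sum_const, Finset.card_univ, Fintype.card_fin, nsmul_eq_mul] at hs
  have : (n : ℝ) ≠ 0 := by exact_mod_cast hn
  rw [div_eq_mul_inv]
  congr 1
  exact eq_inv_of_mul_eq_one_right hs

lemma m4 (n : ℕ) (hn : n ≠ 0) (u : EuclideanSpace ℝ (Fin n)) :
    ∫ r : Sp n, ⟪u, r.val⟫ ^ 4 ∂(sphereUniform n) ≤ 3 * ‖u‖ ^ 4 / n ^ 2 := by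
  have := prob n hn
  let i0 : Fin n := ⟨0, Nat.pos_of_ne_zero hn⟩
  set m := ∫ r : Sp n, ⟪bs n i0, r.val⟫ ^ 4 ∂(sphereUniform n) with hm
  have hm0 : 0 ≤ m := integral_nonneg (fun r => by positivity)
  have hall : ∀ i, ∫ r : Sp n, ⟪bs n i, r.val⟫ ^ 4 ∂(sphereUniform n) = m :=
    fun i => pow_eq n 4 (bs n i) (bs n i0) (by simp)
  have hcross : ∀ i j, m / 3 ≤
      ∫ r : Sp n, ⟪bs n i, r.val⟫ ^ 2 * ⟪bs n j, r.val⟫ ^ 2 ∂(sphereUniform n) := by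
    intro i j
    by_cases hij : i = j
    · subst hij
      have := hall i
      simp only [← pow_add]
      rw [show 2 + 2 = 4 from rfl, this]; linarith
    · have hin : ⟪bs n i, bs n j⟫ = 0 := by
        rw [EuclideanSpace.inner_single_left]
        simp [bs, hij]
      have hp : ‖bs n i + bs n j‖ ^ 2 = 2 := by
        rw [norm_add_sq_real, hin]; norm_num
      have hq : ‖bs n i - bs n j‖ ^ 2 = 2 := by
        rw [norm_sub_sq_real, hin]; norm_num
      have h1 := pow_scale n 4 (bs n i + bs n j) (bs n i0) (by simp)
      have h2 := pow_scale n 4 (bs n i - bs n j) (bs n i0) (by simp)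
      rw [show ‖bs n i + bs n j‖ ^ 4 = 4 by
        rw [show (4:ℕ) = 2 * 2 from rfl, pow_mul, hp]; norm_num] at h1
      rw [show ‖bs n i - bs n j‖ ^ 4 = 4 by
        rw [show (4:ℕ) = 2 * 2 from rfl, pow_mul, hq]; norm_num] at h2
      have h3 : ∫ r : Sp n, (⟪bs n i + bs n j, r.val⟫ ^ 4 + ⟪bs n i - bs n j, r.val⟫ ^ 4)
          ∂(sphereUniform n) = 8 * m := by
        rw [integral_add (integ n hn _ (by fun_prop)) (integ n hn _ (by fun_prop)), h1, h2]
        ring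
      have h4 : ∫ r : Sp n, (⟪bs n i + bs n j, r.val⟫ ^ 4 + ⟪bs n i - bs n j, r.val⟫ ^ 4)
          ∂(sphereUniform n) = ∫ r : Sp n, ((2 * ⟪bs n i, r.val⟫ ^ 4 + 2 * ⟪bs n j, r.val⟫ ^ 4)
            + 12 * (⟪bs n i, r.val⟫ ^ 2 * ⟪bs n j, r.val⟫ ^ 2)) ∂(sphereUniform n) := by
        congr 1
        ext r
        rw [inner_add_left, inner_sub_left]
        ring
      rw [h3, integral_add (integ n hn _ (by fun_prop)) (integ n hn _ (by fun_prop)),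
        integral_add (integ n hn _ (by fun_prop)) (integ n hn _ (by fun_prop)),
        integral_const_mul, integral_const_mul, integral_const_mul, hall, hall] at h4
      linarith
  have hs : ∑ i, ∑ j, ∫ r : Sp n, ⟪bs n i, r.val⟫ ^ 2 * ⟪bs n j, r.val⟫ ^ 2
      ∂(sphereUniform n) = 1 := by
    have : ∀ i, ∑ j, ∫ r : Sp n, ⟪bs n i, r.val⟫ ^ 2 * ⟪bs n j, r.val⟫ ^ 2
      ∂(sphereUniform n) = ∫ r : Sp n, ⟪bs n i, r.val⟫ ^ 2 ∂(sphereUniform n) := by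
      intro i
      rw [← integral_finsetSum _ (fun i _ => integ n hn _ (by fun_prop))]
      simp only [← Finset.mul_sum, sumsq, mul_one]
    simp only [this]
    rw [← integral_finsetSum _ (fun i _ => integ n hn _ (by fun_prop))]
    simp only [sumsq]
    simp
  have hle : ∑ i : Fin n, ∑ j : Fin n, m / 3 ≤ 1 := by
    rw [← hs]
    exact Finset.sum_le_sum fun i _ => Finset.sum_le_sum fun j _ => hcross i j
  simp only [Finset.sum_const, Finset.card_univ, Fintype.card_fin, nsmul_eq_mul] at hle
  have hn' : (0 : ℝ) < n := by exact_mod_cast Nat.pos_of_ne_zero hn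
  rw [pow_scale n 4 u (bs n i0) (by simp), ← hm, le_div_iff₀ (by positivity)]
  have : m * n ^ 2 ≤ 3 := by linarith
  calc ‖u‖ ^ 4 * m * n ^ 2 = ‖u‖ ^ 4 * (m * n ^ 2) := by ring
    _ ≤ ‖u‖ ^ 4 * 3 := by gcongr
    _ = _ := by ring

lemma main (n : ℕ) (M : Matrix (Fin n) (Fin n) ℝ) (a : ℝ) (ha : 0 ≤ a)
    (h : (9 : ENNReal) / 10 ≤ sphereUniform n
      {r | ∑ i, (M.mulVec (WithLp.equiv 2 (Fin n → ℝ) r.val) i) ^ 2 ≤ a}) :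
    ∑ i, ∑ j, (M i j) ^ 2 ≤ 3 * n * a := by
  by_cases hn : n = 0
  · subst hn; simp
  have := prob n hn
  have hn' : (0 : ℝ) < n := by exact_mod_cast Nat.pos_of_ne_zero hn
  let row : Fin n → EuclideanSpace ℝ (Fin n) := fun i => WithLp.toLp 2 (M i)
  have hrow : ∀ i (r : Sp n), M.mulVec (WithLp.equiv 2 (Fin n → ℝ) r.val) i = ⟪row i, r.val⟫ := by
    intro i r
    simp [row, Matrix.mulVec, dotProduct, PiLp.inner_apply, mul_comm]
  have hw : ∀ i, ∑ j, (M i j) ^ 2 = ‖row i‖ ^ 2 := by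
    intro i
    rw [EuclideanSpace.real_norm_sq_eq]
  simp only [hrow] at h
  simp only [hw]
  set S := ∑ i, ‖row i‖ ^ 2 with hS
  have hS0 : 0 ≤ S := Finset.sum_nonneg fun i _ => by positivity
  let Q : Sp n → ℝ := fun r => ∑ i, ⟪row i, r.val⟫ ^ 2
  have hQc : Continuous Q := by fun_prop
  have hQ1 : ∫ r, Q r ∂(sphereUniform n) = S / n := by
    simp only [Q]
    rw [integral_finsetSum _ (fun i _ => integ n hn _ (by fun_prop))]
    simp only [m2 n hn]
    rw [← Finset.sum_div]
  have hQp : ∀ r, Q r ^ 2 ≤ S * ∑ i, ⟪row i, r.val⟫ ^ 4 / ‖row i‖ ^ 2 := by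
    intro r
    apply Finset.sum_sq_le_sum_mul_sum_of_sq_le_mul
    · intro i _; positivity
    · intro i _; positivity
    · intro i _
      by_cases h0 : row i = 0
      · simp [h0]
      · have : ‖row i‖ ≠ 0 := by simpa using h0
        apply le_of_eq
        field_simp
  have hQ2 : ∫ r, Q r ^ 2 ∂(sphereUniform n) ≤ 3 * S ^ 2 / n ^ 2 := by
    calc ∫ r, Q r ^ 2 ∂(sphereUniform n)
        ≤ ∫ r : Sp n, S * ∑ i, ⟪row i, r.val⟫ ^ 4 / ‖row i‖ ^ 2 ∂(sphereUniform n) :=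
          integral_mono (integ n hn _ (by fun_prop)) (integ n hn _ (by fun_prop)) hQp
      _ = S * ∑ i, (∫ r : Sp n, ⟪row i, r.val⟫ ^ 4 ∂(sphereUniform n)) / ‖row i‖ ^ 2 := by
          rw [integral_const_mul, integral_finsetSum _ (fun i _ => integ n hn _ (by fun_prop))]
          simp only [integral_div]
      _ ≤ S * ∑ i, 3 * ‖row i‖ ^ 2 / n ^ 2 := by
          refine mul_le_mul_of_nonneg_left (Finset.sum_le_sum fun i _ => ?_) hS0
          by_cases h0 : row i = 0
          · simp [h0]
          · have : 0 < ‖row i‖ := by simpa using h0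
            rw [div_le_iff₀ (by positivity)]
            refine (m4 n hn _).trans (le_of_eq ?_)
            ring
      _ = 3 * S ^ 2 / n ^ 2 := by
          rw [← Finset.sum_div, ← Finset.mul_sum]
          ring
  set A : Set (Sp n) := {r | Q r ≤ a} with hA
  have hAm : MeasurableSet A := (isClosed_le hQc continuous_const).measurableSet
  have hAr : (9 : ℝ) / 10 ≤ (sphereUniform n).real A := by
    have := ENNReal.toReal_mono (measure_ne_top _ _) h
    rw [measureReal_def]
    simpa using this
  have hAc : (sphereUniform n).real Aᶜ ≤ 1 / 10 := by
    rw [probReal_compl_eq_one_sub hAm]; linarith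
  rcases hS0.eq_or_lt with h0 | hSpos
  · rw [← h0]; positivity
  set m := S / n with hmdef
  have hm : 0 < m := by positivity
  have hpt : ∀ r, Q r ≤ (a + Aᶜ.indicator (fun _ => 5 * m / 2) r) + (1 / (10 * m)) * Q r ^ 2 := by
    intro r
    by_cases hr : r ∈ A
    · have h1 : Q r ≤ a := hr
      have : 0 ≤ (1 / (10 * m)) * Q r ^ 2 := by positivity
      rw [Set.indicator_of_notMem (by simpa using hr)]
      linarith
    · have h1 : r ∈ Aᶜ := hr
      rw [Set.indicator_of_mem h1]
      have : 5 * m / 2 + (1 / (10 * m)) * Q r ^ 2 - Q r = (Q r - 5 * m) ^ 2 / (10 * m) := by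
        field_simp
        ring
      have h2 : 0 ≤ (Q r - 5 * m) ^ 2 / (10 * m) := by positivity
      linarith
  have hind : Integrable (Aᶜ.indicator (fun _ => 5 * m / 2)) (sphereUniform n) :=
    (integrable_const _).indicator hAm.compl
  have hq2 : Integrable (fun r => 1 / (10 * m) * Q r ^ 2) (sphereUniform n) :=
    integ n hn _ (by fun_prop)
  have hai : Integrable (fun r => a + Aᶜ.indicator (fun _ => 5 * m / 2) r) (sphereUniform n) :=
    (integrable_const a).add hind
  have key := integral_mono (integ n hn Q hQc) (hai.add hq2) hpt
  simp only [Pi.add_apply] at key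
  rw [integral_add hai hq2, integral_add (integrable_const a) hind, integral_const_mul,
    integral_indicator_const _ hAm.compl, hQ1] at key
  simp only [integral_const, probReal_univ, smul_eq_mul, one_mul] at key
  have e1 : (sphereUniform n).real Aᶜ * (5 * m / 2) ≤ 1 / 10 * (5 * m / 2) := by gcongr
  have e2 : 1 / (10 * m) * ∫ r, Q r ^ 2 ∂(sphereUniform n) ≤ 3 / 10 * m := by
    calc _ ≤ 1 / (10 * m) * (3 * S ^ 2 / n ^ 2) := by gcongr
      _ = 1 / (10 * m) * (3 * m ^ 2) := by rw [hmdef, div_pow]; ring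
      _ = _ := by field_simp
  have e3 : m ≤ 3 * a := by linarith
  rw [hmdef, div_le_iff₀ hn'] at e3
  linarith

end FrobAux

/-- There is a universal constant `C` such that for every fixed
`M : ℝ^{n×n}` and `a ≥ 0`, if a uniformly random unit vector `r` satisfies
`Pr[‖Mr‖² ≤ a] ≥ 9/10`, then `‖M‖_F² ≤ C n a`. -/
theorem frobenius_bound_of_random_vector :
    ∃ C : ℝ, 0 < C ∧
      ∀ (n : ℕ) (M : Matrix (Fin n) (Fin n) ℝ) (a : ℝ), 0 ≤ a →
        (9 : ENNReal) / 10 ≤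
          sphereUniform n
            {r | ∑ i, (M.mulVec (WithLp.equiv 2 (Fin n → ℝ) r.val) i) ^ 2 ≤ a} →
        ∑ i, ∑ j, (M i j) ^ 2 ≤ C * n * a :=
  ⟨3, by norm_num, fun n M a ha h => FrobAux.main n M a ha h⟩
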